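/- Let n ≥ 2, m ≥ 1 an integer, and n' = n/(n−1). There is a constant c depending only on n and m such that for every weight w with [w]_{A_{1,n'}} < ∞ and every f ∈ C_c^∞(ℝⁿ), ‖w · Mᵐf‖_{L^{n'}(ℝⁿ)} ≤ c · [w]_{A_{1,n'}}^{(m+1)/n'} · ‖w |∇f|‖_{L^{1}(ℝⁿ)}. -/

import Mathlib

/-!
Put `s = n / (n - 1)`, `W = w ^ s` and `K = [w]_{A_{1,s}}`. Then `W` is an `A₁` weight with constant
`K` (`isA1_A1C`), and the estimate is the composition of two inequalities.

*Maximal operator.* Every cube in a Vitali subfamily, enlarged five times, has `W`-mass at most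
`5ⁿ K` times its volume times the essential infimum of `W` on it, whence the weak type bound
`t W{Mg > t} ≤ 5ⁿ K ∫ g W` (`weak_type`). Applying it to the part of `g` above `t / 2` and
integrating in `t` gives `∫ (Mg)^s W ≤ C K ∫ g^s W` (`strong_type`), and `m` iterations cost `Kᵐ`.

*Sobolev inequality.* `∫ |f|^s W ≤ C K (∫ w |∇f|)^s` (`sobolev`). The function is bounded by the
Riesz potential of its gradient (`sphere_mul_enorm_le`). For almost every `y`, the `A₁` condition
gives `W(B(y, r)) ≤ 4ⁿ K W(y) rⁿ` for all `r`, so that `|x - y|^{-(n-1)}` has weak `L^s(W dx)`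
quasinorm at most a constant times `K^{1/s} w(y)` (`kernel_bound`). Integrating the Riesz potential
over a set on which `|g| ≥ 1` gives a level set estimate (`level_set_bound`). Maz'ya's truncation
upgrades it to a strong inequality: it is applied to smooth truncations of `f` between the heights
`2ᵏ` and `2ᵏ⁺¹`, whose gradients are carried by disjoint sets, and the results are summed using
`ℓ¹ ⊆ ℓˢ`.

Together these give `∫ (Mᵐf)^s W ≤ C K^{m+1} (∫ w |∇f|)^s`; the theorem is its `s`-th root.
-/

open MeasureTheory ENNReal Filter Set

noncomputable section

/-- `ℝⁿ` with the Euclidean structure. -/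
abbrev En (n : ℕ) := EuclideanSpace ℝ (Fin n)

/-- Axis-parallel closed cube with corner `a` and side length `h`. -/
def cube {n : ℕ} (a : En n) (h : ℝ) : Set (En n) := {y | ∀ i, a i ≤ y i ∧ y i ≤ a i + h}

/-- Riesz potential of order `1` of a (nonnegative) function:
`I₁ g (x) = ∫ g(y) |x-y|^{-(n-1)} dy`. -/
def riesz (n : ℕ) (g : En n → ℝ) (x : En n) : ℝ≥0∞ :=
  ∫⁻ y, ENNReal.ofReal (g y) * ENNReal.ofReal (‖x - y‖ ^ (-((n : ℝ) - 1)))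

/-- The quantity `(∫ g^p dμ)^{1/p}` for an `ℝ≥0∞`-valued function `g`. -/
def lpNorm {α : Type*} [MeasurableSpace α] (p : ℝ) (g : α → ℝ≥0∞) (μ : Measure α) : ℝ≥0∞ :=
  (∫⁻ x, g x ^ p ∂μ) ^ (1 / p)

/-- Average `⨍_Q g` of an `ℝ≥0∞`-valued function over a set `Q`. -/
def avgE {n : ℕ} (g : En n → ℝ≥0∞) (Q : Set (En n)) : ℝ≥0∞ :=
  (volume Q)⁻¹ * ∫⁻ x in Q, g x

/-- The `A_{p,p*}` constant of a weight `w`; here `ps` plays the role of `p*` and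
`pp` that of `p' = p/(p-1)`:
`[w]_{A_{p,p*}} = sup_Q (⨍_Q w^{p*}) (⨍_Q w^{-p'})^{p*/p'}`. -/
def Apq (n : ℕ) (ps pp : ℝ) (w : En n → ℝ) : ℝ≥0∞ :=
  ⨆ (a : En n) (h : ℝ) (_ : 0 < h),
    avgE (fun x => ENNReal.ofReal (w x) ^ ps) (cube a h) *
      avgE (fun x => ENNReal.ofReal (w x) ^ (-pp)) (cube a h) ^ (ps / pp)

/-- The `A_{1,s}` constant of a weight `w`: the least `c` such that
`⨍_Q w^s ≤ c · essinf_Q w^s` for every cube `Q`. -/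
def A1C (n : ℕ) (s : ℝ) (w : En n → ℝ) : ℝ≥0∞ :=
  sInf {c : ℝ≥0∞ | ∀ (a : En n) (h : ℝ), 0 < h →
    avgE (fun x => ENNReal.ofReal (w x) ^ s) (cube a h) ≤
      c * essInf (fun x => ENNReal.ofReal (w x) ^ s) (volume.restrict (cube a h))}

/-- Hardy–Littlewood maximal operator over axis-parallel cubes containing `x`. -/
def maximal (n : ℕ) (g : En n → ℝ≥0∞) (x : En n) : ℝ≥0∞ :=
  ⨆ (a : En n) (h : ℝ) (_ : 0 < h) (_ : x ∈ cube a h), avgE g (cube a h)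

/-- Weak `L^s` quasinorm `sup_{t>0} t · μ{|g|>t}^{1/s}` of a real function. -/
def wnormR {α : Type*} [MeasurableSpace α] (s : ℝ) (g : α → ℝ) (μ : Measure α) : ℝ≥0∞ :=
  ⨆ (t : ℝ) (_ : 0 < t), ENNReal.ofReal t * μ {x | t < |g x|} ^ (1 / s)

/-! ### Cubes and the A₁ condition -/

lemma cube_eq_preimage {n : ℕ} (a : En n) (h : ℝ) :
    cube a h = (@WithLp.ofLp 2 (Fin n → ℝ)) ⁻¹'
      (Icc (fun i => a i) (fun i => a i + h)) := by
  ext y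
  simp only [cube, mem_ofPred_eq, mem_preimage, mem_Icc, Pi.le_def]
  exact forall_and

lemma measurableSet_cube {n : ℕ} (a : En n) (h : ℝ) : MeasurableSet (cube a h) := by
  rw [cube_eq_preimage]
  exact (WithLp.measurable_ofLp 2 _) measurableSet_Icc

lemma volume_cube {n : ℕ} (a : En n) (h : ℝ) :
    volume (cube a h) = ENNReal.ofReal h ^ n := by
  rw [cube_eq_preimage, (PiLp.volume_preserving_ofLp (Fin n)).measure_preimage
    measurableSet_Icc.nullMeasurableSet, Real.volume_Icc_pi]
  simp

lemma volume_cube_ne_zero {n : ℕ} (a : En n) {h : ℝ} (hh : 0 < h) : volume (cube a h) ≠ 0 := by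
  rw [volume_cube]; simp [hh]

lemma volume_cube_ne_top {n : ℕ} (a : En n) (h : ℝ) : volume (cube a h) ≠ ∞ := by
  rw [volume_cube]; simp

/-- The `A₁` condition with constant `K` for an extended nonnegative weight `W`: the average of `W`
over each cube is at most `K` times its essential infimum there. -/
def IsA1 (n : ℕ) (W : En n → ℝ≥0∞) (K : ℝ≥0∞) : Prop :=
  ∀ (a : En n) (h : ℝ), 0 < h →
    avgE W (cube a h) ≤ K * essInf W (volume.restrict (cube a h))

lemma essInf_cube_ne_top {n : ℕ} {W : En n → ℝ≥0∞} (hW : ∀ x, W x ≠ ∞) (a : En n) {h : ℝ}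
    (hh : 0 < h) : essInf W (volume.restrict (cube a h)) ≠ ∞ := by
  intro htop
  have h1 : ∀ᵐ x ∂(volume.restrict (cube a h)), essInf W (volume.restrict (cube a h)) ≤ W x :=
    ae_essInf_le
  rw [htop] at h1
  have h2 : ∀ᵐ x ∂(volume.restrict (cube a h)), False := by
    filter_upwards [h1] with x hx
    exact hW x (top_le_iff.1 hx)
  rw [ae_iff] at h2
  simp at h2
  exact volume_cube_ne_zero a hh h2

/-- The infimum defining `A1C` is attained when it is finite. -/
lemma isA1_A1C {n : ℕ} {s : ℝ} (hs : 0 ≤ s) {w : En n → ℝ} (hw : A1C n s w < ∞) :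
    IsA1 n (fun x => ENNReal.ofReal (w x) ^ s) (A1C n s w) := by
  intro a h hh
  have hne := essInf_cube_ne_top (W := fun x => ENNReal.ofReal (w x) ^ s)
    (fun x => ENNReal.rpow_ne_top_of_nonneg hs ENNReal.ofReal_ne_top) a hh
  rcases eq_or_ne (essInf (fun x => ENNReal.ofReal (w x) ^ s) (volume.restrict (cube a h))) 0
    with h0 | h0
  · obtain ⟨c, hc, -⟩ := sInf_lt_iff.1 hw
    have := hc a h hh
    rw [h0, mul_zero] at this ⊢
    exact this
  · rw [← ENNReal.div_le_iff h0 hne]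
    refine le_sInf fun c hc => ?_
    rw [ENNReal.div_le_iff h0 hne]
    exact hc a h hh

lemma IsA1.lintegral_cube_le {n : ℕ} {W : En n → ℝ≥0∞} {K : ℝ≥0∞} (hK : IsA1 n W K) (a : En n)
    {h : ℝ} (hh : 0 < h) :
    ∫⁻ x in cube a h, W x ≤
      K * ENNReal.ofReal h ^ n * essInf W (volume.restrict (cube a h)) := by
  have h1 := hK a h hh
  rw [avgE, ENNReal.inv_mul_le_iff (volume_cube_ne_zero a hh) (volume_cube_ne_top a h),
    volume_cube] at h1
  refine h1.trans (le_of_eq (by ring))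

lemma IsA1.lintegral_cube_lt_top {n : ℕ} {W : En n → ℝ≥0∞} {K : ℝ≥0∞} (hK : IsA1 n W K)
    (hKtop : K ≠ ∞) (hW : ∀ x, W x ≠ ∞) (a : En n) {h : ℝ} (hh : 0 < h) :
    ∫⁻ x in cube a h, W x < ∞ := by
  refine (hK.lintegral_cube_le a hh).trans_lt ?_
  have := essInf_cube_ne_top hW a hh
  exact ENNReal.mul_lt_top (ENNReal.mul_lt_top hKtop.lt_top (by simp)) this.lt_top

lemma isOpen_openCube {n : ℕ} (a : En n) (h : ℝ) :
    IsOpen {y : En n | ∀ i, a i < y i ∧ y i < a i + h} := by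
  rw [ofPred_forall]
  refine isOpen_iInter_of_finite fun i => ?_
  have hc : Continuous fun y : En n => y i := by fun_prop
  exact (isOpen_lt continuous_const hc).inter (isOpen_lt hc continuous_const)

lemma interior_cube_nonempty {n : ℕ} (a : En n) {h : ℝ} (hh : 0 < h) :
    (interior (cube a h)).Nonempty := by
  refine ⟨WithLp.toLp 2 (fun i => a i + h / 2), ?_⟩
  refine interior_mono (s := {y : En n | ∀ i, a i < y i ∧ y i < a i + h}) (t := cube a h)
    (fun y hy i => ⟨(hy i).1.le, (hy i).2.le⟩) ?_
  rw [(isOpen_openCube a h).interior_eq]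
  intro i
  simp only
  constructor <;> linarith

/-! ### Semicontinuity of the maximal function -/

/-- `Mg` is lower semicontinuous: a cube whose average exceeds `t` can be enlarged slightly without
losing this property, and the enlarged cube is a neighbourhood of the original one. -/
lemma isOpen_lt_maximal {n : ℕ} (g : En n → ℝ≥0∞) (t : ℝ≥0∞) :
    IsOpen {x | t < maximal n g x} := by
  rw [isOpen_iff_mem_nhds]
  intro x hx
  simp only [mem_ofPred_eq, maximal, lt_iSup_iff] at hx
  obtain ⟨a, h, hh, hxa, ht⟩ := hx
  have hcont : Tendsto (fun ε : ℝ => (ENNReal.ofReal (h + 2 * ε) ^ n)⁻¹ * ∫⁻ y in cube a h, g y)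
      (nhdsWithin 0 (Ioi 0)) (nhds ((ENNReal.ofReal h ^ n)⁻¹ * ∫⁻ y in cube a h, g y)) := by
    refine Tendsto.mono_left ?_ nhdsWithin_le_nhds
    refine ENNReal.Tendsto.mul_const ?_ (Or.inl ?_)
    · refine _root_.tendsto_inv_iff.2 (ENNReal.Tendsto.pow ?_)
      refine ENNReal.tendsto_ofReal ?_
      have : Continuous (fun ε : ℝ => h + 2 * ε) := by fun_prop
      simpa using this.tendsto 0
    · simp
  rw [avgE, volume_cube] at ht
  have hev := hcont.eventually (lt_mem_nhds ht)
  obtain ⟨ε, hε, hε0⟩ := (hev.and self_mem_nhdsWithin).exists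
  have hε0 : 0 < ε := hε0
  set a' : En n := WithLp.toLp 2 (fun i => a i - ε) with ha'
  have hsub : cube a h ⊆ cube a' (h + 2 * ε) := by
    intro y hy i
    have := hy i
    simp only [ha']
    constructor <;> linarith
  refine mem_of_superset ((isOpen_openCube a' (h + 2 * ε)).mem_nhds ?_) ?_
  · intro i
    have := hxa i
    simp only [ha']
    constructor <;> linarith
  · intro y hy
    simp only [mem_ofPred_eq, maximal, lt_iSup_iff]
    refine ⟨a', h + 2 * ε, by linarith, fun i => ⟨(hy i).1.le, (hy i).2.le⟩, hε.trans_le ?_⟩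
    rw [avgE, volume_cube]
    gcongr

lemma measurable_maximal {n : ℕ} (g : En n → ℝ≥0∞) : Measurable (maximal n g) :=
  measurable_of_Ioi fun t => (isOpen_lt_maximal g t).measurableSet

lemma maximal_le_of_le {n : ℕ} {g : En n → ℝ≥0∞} {B : ℝ≥0∞} (hg : ∀ x, g x ≤ B) (x : En n) :
    maximal n g x ≤ B := by
  simp only [maximal, iSup_le_iff]
  intro a h hh _
  rw [avgE, ENNReal.inv_mul_le_iff (volume_cube_ne_zero a hh) (volume_cube_ne_top a h)]
  refine (lintegral_mono fun y => hg y).trans ?_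
  simp [mul_comm]

/-! ### Weighted weak type bound for the maximal operator -/

/-- Weighted weak type `(1,1)` bound for the maximal operator restricted to cubes of side at most
`R`; the bound on the sides makes the Vitali covering lemma applicable. -/
lemma weak_type_aux {n : ℕ} {W : En n → ℝ≥0∞} {K : ℝ≥0∞} (hK : IsA1 n W K)
    {g : En n → ℝ≥0∞} (t : ℝ≥0∞) (R : ℝ) :
    t * (volume.withDensity W) {x | ∃ (a : En n) (h : ℝ), 0 < h ∧ h ≤ R ∧ x ∈ cube a h ∧
        t < avgE g (cube a h)} ≤ 5 ^ n * K * ∫⁻ x, g x * W x := by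
  set T : Set (En n × ℝ) := {q | 0 < q.2 ∧ q.2 ≤ R ∧ t < avgE g (cube q.1 q.2)} with hT
  obtain ⟨u, huT, hdisj, hcov⟩ := Vitali.exists_disjoint_subfamily_covering_enlargement
    (fun q : En n × ℝ => cube q.1 q.2) T (fun q => q.2) 2 (by norm_num)
    (fun q hq => hq.1.le) R (fun q hq => hq.2.1)
    (fun q hq => (interior_cube_nonempty q.1 hq.1).mono interior_subset)
  have hucount : u.Countable :=
    hdisj.countable_of_nonempty_interior fun q hq => interior_cube_nonempty q.1 (huT hq).1
  set big : En n × ℝ → Set (En n) :=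
    fun q => cube (WithLp.toLp 2 (fun i => q.1 i - 2 * q.2)) (5 * q.2) with hbig
  have hsub : {x | ∃ (a : En n) (h : ℝ), 0 < h ∧ h ≤ R ∧ x ∈ cube a h ∧
        t < avgE g (cube a h)} ⊆ ⋃ q ∈ u, big q := by
    rintro x ⟨a, h, hh, hR, hx, ht⟩
    obtain ⟨q, hq, ⟨z, hz1, hz2⟩, hle⟩ := hcov (a, h) ⟨hh, hR, ht⟩
    refine mem_biUnion hq fun i => ?_
    have h1 := hx i
    have h2 := hz1 i
    have h3 := hz2 i
    simp only at h1 h2 h3 hle ⊢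
    constructor <;> linarith
  have hone : ∀ q ∈ u, t * (volume.withDensity W) (big q) ≤
      5 ^ n * K * ∫⁻ x in cube q.1 q.2, g x * W x := by
    intro q hq
    obtain ⟨hq0, -, hqt⟩ := huT hq
    rw [withDensity_apply _ (measurableSet_cube _ _)]
    have hsubq : cube q.1 q.2 ⊆ big q := by
      intro y hy i
      have := hy i
      simp only
      constructor <;> linarith
    set e := essInf W (volume.restrict (big q)) with he
    have hae : ∀ᵐ x ∂(volume.restrict (cube q.1 q.2)), e ≤ W x :=
      ae_mono (Measure.restrict_mono hsubq le_rfl) ae_essInf_le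
    have h1 : t * ENNReal.ofReal q.2 ^ n ≤ ∫⁻ x in cube q.1 q.2, g x := by
      have := hqt.le
      rw [avgE, mul_comm, ← div_eq_mul_inv, ENNReal.le_div_iff_mul_le
        (Or.inl (volume_cube_ne_zero _ hq0)) (Or.inl (volume_cube_ne_top _ _)), volume_cube] at this
      exact this
    have h2 : ∫⁻ x in big q, W x ≤ K * ENNReal.ofReal (5 * q.2) ^ n * e :=
      hK.lintegral_cube_le _ (by linarith)
    calc t * ∫⁻ x in big q, W x ≤ t * (K * ENNReal.ofReal (5 * q.2) ^ n * e) := by gcongr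
      _ = 5 ^ n * K * ((t * ENNReal.ofReal q.2 ^ n) * e) := by
          rw [ENNReal.ofReal_mul (by norm_num), mul_pow]
          norm_num
          ring
      _ ≤ 5 ^ n * K * ((∫⁻ x in cube q.1 q.2, g x) * e) := by gcongr
      _ ≤ 5 ^ n * K * ∫⁻ x in cube q.1 q.2, g x * W x := by
          gcongr
          refine (lintegral_mul_const_le _ _).trans (lintegral_mono_ae ?_)
          filter_upwards [hae] with x hx
          gcongr
  calc _ ≤ t * (volume.withDensity W) (⋃ q ∈ u, big q) := by gcongr
    _ ≤ t * ∑' q : u, (volume.withDensity W) (big q) := by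
        gcongr
        exact measure_biUnion_le _ hucount _
    _ = ∑' q : u, t * (volume.withDensity W) (big q) := ENNReal.tsum_mul_left.symm
    _ ≤ ∑' q : u, 5 ^ n * K * ∫⁻ x in cube q.1.1 q.1.2, g x * W x :=
        ENNReal.tsum_le_tsum fun q => hone q q.2
    _ = 5 ^ n * K * ∑' q : u, ∫⁻ x in cube q.1.1 q.1.2, g x * W x := ENNReal.tsum_mul_left
    _ = 5 ^ n * K * ∫⁻ x in ⋃ q ∈ u, cube q.1 q.2, g x * W x := by
        rw [lintegral_biUnion hucount (fun q _ => measurableSet_cube _ _) hdisj]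
    _ ≤ 5 ^ n * K * ∫⁻ x, g x * W x := by
        gcongr
        exact Measure.restrict_le_self

/-- Weighted weak type `(1,1)` bound; the general case follows by letting the bound on the sides of
the cubes tend to infinity. -/
lemma weak_type {n : ℕ} {W : En n → ℝ≥0∞} {K : ℝ≥0∞} (hK : IsA1 n W K)
    (g : En n → ℝ≥0∞) (t : ℝ≥0∞) :
    t * (volume.withDensity W) {x | t < maximal n g x} ≤ 5 ^ n * K * ∫⁻ x, g x * W x := by
  set S : ℕ → Set (En n) := fun N => {x | ∃ (a : En n) (h : ℝ), 0 < h ∧ h ≤ N ∧ x ∈ cube a h ∧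
        t < avgE g (cube a h)} with hS
  have hmono : Monotone S := by
    rintro N M hNM x ⟨a, h, hh, hN, hx⟩
    exact ⟨a, h, hh, hN.trans (by exact_mod_cast hNM), hx⟩
  have hU : {x | t < maximal n g x} ⊆ ⋃ N, S N := by
    intro x hx
    simp only [mem_ofPred_eq, maximal, lt_iSup_iff] at hx
    obtain ⟨a, h, hh, hxa, ht⟩ := hx
    obtain ⟨N, hN⟩ := exists_nat_ge h
    exact mem_iUnion.2 ⟨N, a, h, hh, hN, hxa, ht⟩
  calc _ ≤ t * (volume.withDensity W) (⋃ N, S N) := by gcongr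
    _ = ⨆ N, t * (volume.withDensity W) (S N) := by
        rw [hmono.measure_iUnion, ENNReal.mul_iSup]
    _ ≤ _ := iSup_le fun N => weak_type_aux hK t N

/-! ### Weighted strong type bound for the maximal operator -/

/-- The weak type bound applied to the part of `g` above height `t / 2`. The measure on the right
has density `g * W`, so that the layer cake formula can be applied to both sides. -/
lemma weak_type_truncated {n : ℕ} {W : En n → ℝ≥0∞} {K : ℝ≥0∞} (hK : IsA1 n W K)
    {g : En n → ℝ≥0∞} (hg : Measurable g) (t : ℝ) (ht : 0 < t) :
    (volume.withDensity W) {x | ENNReal.ofReal t < maximal n g x} ≤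
      ENNReal.ofReal (2 / t) * (5 ^ n * K *
        (volume.withDensity (fun x => g x * W x)) {x | ENNReal.ofReal t < 2 * g x}) := by
  set A : Set (En n) := {x | ENNReal.ofReal t < 2 * g x} with hA
  have hAm : MeasurableSet A := measurableSet_lt measurable_const (hg.const_mul 2)
  set g1 : En n → ℝ≥0∞ := A.indicator g with hg1
  have ht2 : ENNReal.ofReal t = 2 * ENNReal.ofReal (t / 2) := by
    rw [← ENNReal.ofReal_ofNat 2, ← ENNReal.ofReal_mul (by norm_num)]
    congr 1
    ring
  have hle : ∀ x, g x ≤ g1 x + ENNReal.ofReal (t / 2) := by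
    intro x
    by_cases hx : x ∈ A
    · simp [hg1, hx]
    · simp only [hg1, indicator_of_notMem hx, zero_add]
      have hx' : 2 * g x ≤ ENNReal.ofReal t := not_lt.1 hx
      rw [ht2] at hx'
      exact (ENNReal.mul_le_mul_iff_right (by norm_num) (by norm_num)).1 hx'
  have hM : ∀ x, maximal n g x ≤ maximal n g1 x + ENNReal.ofReal (t / 2) := by
    intro x
    refine iSup_le fun a => iSup_le fun h => iSup_le fun hh => iSup_le fun hx => ?_
    have h1 : avgE g1 (cube a h) ≤ maximal n g1 x :=
      le_iSup_of_le a (le_iSup_of_le h (le_iSup_of_le hh (le_iSup_of_le hx le_rfl)))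
    refine le_trans ?_ (add_le_add_left h1 _)
    have h2 : ∫⁻ y in cube a h, g y ≤
        (∫⁻ y in cube a h, g1 y) + ENNReal.ofReal (t / 2) * volume (cube a h) := by
      refine (lintegral_mono hle).trans ?_
      rw [lintegral_add_right _ measurable_const, setLIntegral_const]
    calc avgE g (cube a h) ≤ (volume (cube a h))⁻¹ *
        ((∫⁻ y in cube a h, g1 y) + ENNReal.ofReal (t / 2) * volume (cube a h)) := by
          rw [avgE]; gcongr
      _ = avgE g1 (cube a h) +
          ENNReal.ofReal (t / 2) * ((volume (cube a h))⁻¹ * volume (cube a h)) := by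
          rw [avgE]; ring
      _ = _ := by
          rw [ENNReal.inv_mul_cancel (volume_cube_ne_zero a hh) (volume_cube_ne_top a h), mul_one]
  have hsub : {x | ENNReal.ofReal t < maximal n g x} ⊆
      {x | ENNReal.ofReal (t / 2) < maximal n g1 x} := by
    intro x hx
    have h1 : ENNReal.ofReal t < maximal n g1 x + ENNReal.ofReal (t / 2) :=
      lt_of_lt_of_le hx (hM x)
    by_contra hcon
    have hcon : maximal n g1 x ≤ ENNReal.ofReal (t / 2) := not_lt.1 hcon
    refine absurd h1 (not_lt.2 ?_)
    rw [ht2, two_mul]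
    gcongr
  have hweak := weak_type hK g1 (ENNReal.ofReal (t / 2))
  have hint : ∫⁻ x, g1 x * W x = (volume.withDensity (fun x => g x * W x)) A := by
    rw [withDensity_apply _ hAm, ← lintegral_indicator hAm]
    refine lintegral_congr fun x => ?_
    by_cases hx : x ∈ A <;> simp [hg1, hx]
  rw [hint] at hweak
  have hinv : ENNReal.ofReal (2 / t) * ENNReal.ofReal (t / 2) = 1 := by
    rw [← ENNReal.ofReal_mul (by positivity), show 2 / t * (t / 2) = 1 by field_simp]
    simp
  calc _ ≤ (volume.withDensity W) {x | ENNReal.ofReal (t / 2) < maximal n g1 x} := by gcongr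
    _ = ENNReal.ofReal (2 / t) * (ENNReal.ofReal (t / 2) *
        (volume.withDensity W) {x | ENNReal.ofReal (t / 2) < maximal n g1 x}) := by
        rw [← mul_assoc, hinv, one_mul]
    _ ≤ _ := by gcongr

/-- The constant in the weighted strong type bound for the maximal operator. -/
def strongC (n : ℕ) (s : ℝ) : ℝ := s * (2 * 5 ^ n) * (s - 1)⁻¹ * 2 ^ (s - 1)

/-- Weighted strong type bound, with operator norm of order `K ^ (1 / s)`. -/
lemma strong_type {n : ℕ} {W : En n → ℝ≥0∞} {K : ℝ≥0∞} (hK : IsA1 n W K)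
    (hW : AEMeasurable W volume) {s : ℝ} (hs : 1 < s)
    {g : En n → ℝ≥0∞} (hg : Measurable g) {B : ℝ≥0∞} (hB : B ≠ ∞) (hgB : ∀ x, g x ≤ B) :
    ∫⁻ x, W x * maximal n g x ^ s ≤
      ENNReal.ofReal (strongC n s) * K * ∫⁻ x, W x * g x ^ s := by
  have hs0 : 0 < s := by linarith
  have hs1 : 0 < s - 1 := by linarith
  have hMtop : ∀ x, maximal n g x ≠ ∞ := fun x =>
    ((maximal_le_of_le hgB x).trans_lt hB.lt_top).ne
  have hgtop : ∀ x, g x ≠ ∞ := fun x => ((hgB x).trans_lt hB.lt_top).ne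
  set μ := volume.withDensity W with hμ
  set ν := volume.withDensity (fun x => g x * W x) with hν
  have e1 : ∫⁻ x, W x * maximal n g x ^ s =
      ∫⁻ x, ENNReal.ofReal ((maximal n g x).toReal ^ s) ∂μ := by
    rw [hμ, lintegral_withDensity_eq_lintegral_mul₀ hW
      (((measurable_maximal g).ennreal_toReal.pow_const s).ennreal_ofReal.aemeasurable)]
    refine lintegral_congr fun x => ?_
    simp only [Pi.mul_apply]
    rw [← ENNReal.ofReal_rpow_of_nonneg ENNReal.toReal_nonneg hs0.le, ENNReal.ofReal_toReal (hMtop x)]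
  have e2 : ∫⁻ x, ENNReal.ofReal ((2 * (g x).toReal) ^ (s - 1)) ∂ν =
      ENNReal.ofReal (2 ^ (s - 1)) * ∫⁻ x, W x * g x ^ s := by
    rw [hν, lintegral_withDensity_eq_lintegral_mul₀ (f := fun x => g x * W x)
      (hg.aemeasurable.mul hW)
      (((hg.ennreal_toReal.const_mul 2).pow_const (s - 1)).ennreal_ofReal.aemeasurable),
      ← lintegral_const_mul' _ _ ENNReal.ofReal_ne_top]
    refine lintegral_congr fun x => ?_
    simp only [Pi.mul_apply]
    rw [Real.mul_rpow (by norm_num) ENNReal.toReal_nonneg, ENNReal.ofReal_mul (by positivity),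
      ← ENNReal.ofReal_rpow_of_nonneg ENNReal.toReal_nonneg hs1.le,
      ENNReal.ofReal_toReal (hgtop x)]
    have : g x ^ s = g x * g x ^ (s - 1) := by
      conv_lhs => rw [show s = 1 + (s - 1) by ring]
      rw [ENNReal.rpow_add_of_nonneg _ _ zero_le_one hs1.le, ENNReal.rpow_one]
    rw [this]
    ring
  rw [e1, lintegral_rpow_eq_lintegral_meas_lt_mul μ
    (Eventually.of_forall fun x => ENNReal.toReal_nonneg)
    (measurable_maximal g).ennreal_toReal.aemeasurable hs0]
  have e3 := lintegral_rpow_eq_lintegral_meas_lt_mul ν (f := fun x => 2 * (g x).toReal)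
    (Eventually.of_forall fun x => by positivity)
    (hg.ennreal_toReal.const_mul 2).aemeasurable hs1
  rw [e2] at e3
  have key : ∫⁻ t in Ioi (0 : ℝ), μ {x | t < (maximal n g x).toReal} *
      ENNReal.ofReal (t ^ (s - 1)) ≤
      (ENNReal.ofReal 2 * (5 ^ n * K)) * ∫⁻ t in Ioi (0 : ℝ), ν {x | t < 2 * (g x).toReal} *
        ENNReal.ofReal (t ^ (s - 1 - 1)) := by
    have hmeas : Measurable fun t : ℝ => ν {x | t < 2 * (g x).toReal} *
        ENNReal.ofReal (t ^ (s - 1 - 1)) := by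
      refine Measurable.mul ?_ (by fun_prop)
      refine Antitone.measurable fun a b hab => measure_mono fun x hx => ?_
      exact lt_of_le_of_lt hab hx
    rw [← lintegral_const_mul _ hmeas]
    refine setLIntegral_mono' measurableSet_Ioi fun t ht => ?_
    have ht : 0 < t := ht
    have h1 : {x | t < (maximal n g x).toReal} = {x | ENNReal.ofReal t < maximal n g x} := by
      ext x
      exact (ENNReal.ofReal_lt_iff_lt_toReal ht.le (hMtop x)).symm
    have h2 : {x | t < 2 * (g x).toReal} = {x | ENNReal.ofReal t < 2 * g x} := by
      ext x
      simp only [mem_ofPred_eq]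
      rw [ENNReal.ofReal_lt_iff_lt_toReal ht.le (ENNReal.mul_ne_top (by norm_num) (hgtop x))]
      simp
    rw [h1, h2]
    -- The factor `1 / t` of the weak type bound lowers the exponent of `t` from `s - 1` to `s - 2`.
    have h3 : ENNReal.ofReal (2 / t) * ENNReal.ofReal (t ^ (s - 1)) =
        ENNReal.ofReal 2 * ENNReal.ofReal (t ^ (s - 1 - 1)) := by
      rw [← ENNReal.ofReal_mul (by positivity), ← ENNReal.ofReal_mul (by positivity),
        Real.rpow_sub_one ht.ne' (s - 1)]
      congr 1
      field_simp
    calc _ ≤ (ENNReal.ofReal (2 / t) * (5 ^ n * K * ν {x | ENNReal.ofReal t < 2 * g x})) *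
          ENNReal.ofReal (t ^ (s - 1)) := by
          gcongr
          exact weak_type_truncated hK hg t ht
      _ = (ENNReal.ofReal (2 / t) * ENNReal.ofReal (t ^ (s - 1))) *
          (5 ^ n * K * ν {x | ENNReal.ofReal t < 2 * g x}) := by ring
      _ = _ := by rw [h3]; ring
  have e4 : ∫⁻ t in Ioi (0 : ℝ), ν {x | t < 2 * (g x).toReal} *
        ENNReal.ofReal (t ^ (s - 1 - 1)) =
      ENNReal.ofReal (s - 1)⁻¹ * (ENNReal.ofReal (2 ^ (s - 1)) * ∫⁻ x, W x * g x ^ s) := by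
    rw [e3, ← mul_assoc, ← ENNReal.ofReal_mul (by positivity), inv_mul_cancel₀ hs1.ne']
    simp
  calc _ ≤ ENNReal.ofReal s * ((ENNReal.ofReal 2 * (5 ^ n * K)) *
        ∫⁻ t in Ioi (0 : ℝ), ν {x | t < 2 * (g x).toReal} *
        ENNReal.ofReal (t ^ (s - 1 - 1))) := by gcongr
    _ = _ := by
        rw [e4, strongC, ENNReal.ofReal_mul (by positivity), ENNReal.ofReal_mul (by positivity),
          ENNReal.ofReal_mul hs0.le, ENNReal.ofReal_mul (by norm_num),
          ENNReal.ofReal_pow (by norm_num), ENNReal.ofReal_ofNat 5]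
        ring

/-- Boundedness and measurability are carried along the induction, since each application of
`strong_type` needs them. -/
lemma strong_type_iterate {n : ℕ} {W : En n → ℝ≥0∞} {K : ℝ≥0∞} (hK : IsA1 n W K)
    (hW : AEMeasurable W volume) {s : ℝ} (hs : 1 < s)
    {g : En n → ℝ≥0∞} (hg : Measurable g) {B : ℝ≥0∞} (hB : B ≠ ∞) (hgB : ∀ x, g x ≤ B) (m : ℕ) :
    (Measurable ((maximal n)^[m] g) ∧ ∀ x, (maximal n)^[m] g x ≤ B) ∧
    ∫⁻ x, W x * (maximal n)^[m] g x ^ s ≤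
      (ENNReal.ofReal (strongC n s) * K) ^ m * ∫⁻ x, W x * g x ^ s := by
  induction m with
  | zero => simpa using ⟨hg, hgB⟩
  | succ m ih =>
    obtain ⟨⟨hm, hb⟩, hi⟩ := ih
    simp only [Function.iterate_succ_apply']
    refine ⟨⟨measurable_maximal _, fun x => maximal_le_of_le hb x⟩, ?_⟩
    refine (strong_type hK hW hs hm hB hb).trans ?_
    rw [pow_succ', mul_assoc (ENNReal.ofReal (strongC n s) * K) _ _]
    gcongr

/-! ### Pointwise bound by the Riesz potential -/

/-- Fundamental theorem of calculus along the ray from `x` in the direction `ω`. The ray is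
parametrised backwards, over `(-∞, 0]`, to match the one-variable lemma. -/
lemma enorm_le_lintegral_ray {n : ℕ} {g : En n → ℝ} (hg : ContDiff ℝ 1 g)
    (hgc : HasCompactSupport g) (x ω : En n) (hω : ‖ω‖ = 1) :
    ‖g x‖ₑ ≤ ∫⁻ r in Ioi (0 : ℝ), ‖fderiv ℝ g (x + r • ω)‖ₑ := by
  set u : ℝ → ℝ := fun t => g (x + (-t) • ω) with hu
  have hline : ContDiff ℝ 1 (fun t : ℝ => x + (-t) • ω) := by fun_prop
  have hu1 : ContDiff ℝ 1 u := hg.comp hline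
  have hiso : Isometry (fun t : ℝ => x + (-t) • ω) := by
    refine Isometry.of_dist_eq fun a b => ?_
    rw [dist_add_left, dist_eq_norm, ← sub_smul, norm_smul, hω, mul_one, dist_comm, dist_eq_norm]
    congr 1
    ring
  have huc : HasCompactSupport u := hgc.comp_isClosedEmbedding hiso.isClosedEmbedding
  have h1 := huc.enorm_le_lintegral_Ici_deriv hu1 0
  have hu0 : u 0 = g x := by simp [hu]
  rw [hu0] at h1
  refine h1.trans ?_
  have hd : ∀ t, ‖deriv u t‖ₑ ≤ ‖fderiv ℝ g (x + (-t) • ω)‖ₑ := by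
    intro t
    have hl : HasDerivAt (fun t : ℝ => x + (-t) • ω) ((-1 : ℝ) • ω) t := by
      have := ((hasDerivAt_id t).neg.smul_const ω).const_add x
      simpa using this
    have hgd := ((hg.differentiable (by norm_num)) (x + (-t) • ω)).hasFDerivAt
    have := (hgd.comp_hasDerivAt t hl).deriv
    have hnorm : ‖deriv u t‖ ≤ ‖fderiv ℝ g (x + (-t) • ω)‖ := by
      have e : deriv u t = fderiv ℝ g (x + (-t) • ω) ((-1 : ℝ) • ω) := this
      rw [e]
      refine ((fderiv ℝ g (x + (-t) • ω)).le_opNorm _).trans ?_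
      simp [hω]
    exact enorm_le_iff_norm_le.2 hnorm
  calc ∫⁻ t in Iic (0 : ℝ), ‖deriv u t‖ₑ ≤ ∫⁻ t in Iic (0 : ℝ), ‖fderiv ℝ g (x + (-t) • ω)‖ₑ :=
        lintegral_mono hd
    _ = ∫⁻ r in Ici (0 : ℝ), ‖fderiv ℝ g (x + r • ω)‖ₑ := by
        have := (Measure.measurePreserving_neg (volume : Measure ℝ)).setLIntegral_comp_preimage_emb
          (MeasurableEquiv.neg ℝ).measurableEmbedding
          (fun r => ‖fderiv ℝ g (x + r • ω)‖ₑ) (Ici (0 : ℝ))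
        rw [← this]
        simp
    _ = _ := by rw [restrict_Ioi_eq_restrict_Ici]

/-- The classical pointwise bound of a compactly supported function by the Riesz potential of its
gradient: average the fundamental theorem of calculus over all rays issuing from `x`, then pass from
polar to Cartesian coordinates. -/
lemma sphere_mul_enorm_le {n : ℕ} (hn : 2 ≤ n) {g : En n → ℝ} (hg : ContDiff ℝ 1 g)
    (hgc : HasCompactSupport g) (x : En n) :
    (volume : Measure (En n)).toSphere univ * ‖g x‖ₑ ≤
      ∫⁻ y, ‖fderiv ℝ g y‖ₑ * ENNReal.ofReal (‖x - y‖ ^ (-((n : ℝ) - 1))) := by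
  have hdim : Module.finrank ℝ (En n) = n := by simp
  set F : En n → ℝ≥0∞ :=
    fun z => ‖fderiv ℝ g (x + z)‖ₑ * ENNReal.ofReal (‖z‖ ^ (-((n : ℝ) - 1))) with hF
  have hfc : Continuous (fderiv ℝ g) := hg.continuous_fderiv (by norm_num)
  have hFm : Measurable F := by
    have h1 : Measurable fun z => ‖fderiv ℝ g (x + z)‖ₑ :=
      (hfc.comp (continuous_const.add continuous_id)).enorm.measurable
    have h2 : Measurable fun z : En n => ENNReal.ofReal (‖z‖ ^ (-((n : ℝ) - 1))) := by fun_prop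
    exact h1.mul h2
  have e1 : ∫⁻ y, ‖fderiv ℝ g y‖ₑ * ENNReal.ofReal (‖x - y‖ ^ (-((n : ℝ) - 1))) =
      ∫⁻ z, F z := by
    rw [← lintegral_add_left_eq_self _ x]
    refine lintegral_congr fun z => ?_
    simp [hF]
  have : Nontrivial (En n) := by
    have : Nonempty (Fin n) := ⟨⟨0, by omega⟩⟩
    infer_instance
  have e2 : ∫⁻ z, F z = ∫⁻ p : Metric.sphere (0 : En n) 1 × Ioi (0 : ℝ), F (p.2.1 • p.1.1)
      ∂((volume : Measure (En n)).toSphere.prod (Measure.volumeIoiPow (n - 1))) := by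
    have hmp := (volume : Measure (En n)).measurePreserving_homeomorphUnitSphereProd
    rw [hdim] at hmp
    rw [← hmp.lintegral_comp_emb (Homeomorph.measurableEmbedding _)]
    have : ∫⁻ z, F z = ∫⁻ z in ({0}ᶜ : Set (En n)), F z := by
      rw [restrict_compl_singleton]
    rw [this, ← lintegral_subtype_comap (measurableSet_singleton _).compl]
    refine lintegral_congr fun z => ?_
    congr 1
    have hz : ‖(z : En n)‖ ≠ 0 := norm_ne_zero_iff.2 z.2
    simp [smul_smul, hz]
  have hmeas2 : Measurable fun p : Metric.sphere (0 : En n) 1 × Ioi (0 : ℝ) =>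
      F (p.2.1 • p.1.1) := by
    refine hFm.comp ?_
    exact (measurable_subtype_coe.comp measurable_snd).smul
      (measurable_subtype_coe.comp measurable_fst)
  rw [e1, e2, lintegral_prod _ hmeas2.aemeasurable, mul_comm, ← lintegral_const]
  refine lintegral_mono fun ω => ?_
  have hω : ‖(ω : En n)‖ = 1 := by simp
  refine (enorm_le_lintegral_ray hg hgc x ω hω).trans (le_of_eq ?_)
  have hmeas3 : Measurable fun r : Ioi (0 : ℝ) => F (r.1 • ω.1) :=
    hFm.comp (measurable_subtype_coe.smul measurable_const)
  simp only
  rw [Measure.volumeIoiPow, lintegral_withDensity_eq_lintegral_mul _ (by fun_prop) hmeas3,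
    ← lintegral_subtype_comap measurableSet_Ioi]
  refine lintegral_congr fun r => ?_
  have hr : (0 : ℝ) < r := r.2
  simp only [Pi.mul_apply, hF, norm_smul, hω, mul_one, Real.norm_eq_abs,
    abs_of_pos hr]
  rw [mul_left_comm, ← ENNReal.ofReal_mul (by positivity), ← Real.rpow_natCast,
    ← Real.rpow_add hr, Nat.cast_sub (by omega)]
  simp

/-! ### Weighted level set estimate -/

lemma abs_coord_sub_le {n : ℕ} (x y : En n) (i : Fin n) : |x i - y i| ≤ ‖x - y‖ := by
  simpa using PiLp.norm_apply_le (x - y) i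

/-- For almost every `y`, the weighted measure of every ball about `y` is controlled by `W y`. The
exceptional set is a countable union, over cubes with rational corner and side. -/
lemma IsA1.ae_ball_le {n : ℕ} {W : En n → ℝ≥0∞} {K : ℝ≥0∞} (hK : IsA1 n W K) :
    ∀ᵐ y, ∀ r : ℝ, 0 < r →
      (volume.withDensity W) (Metric.ball y r) ≤ (4 ^ n * K * W y) * ENNReal.ofReal r ^ n := by
  set Q : (Fin n → ℚ) × ℚ → Set (En n) :=
    fun q => cube (WithLp.toLp 2 (fun i => (q.1 i : ℝ))) (q.2 : ℝ) with hQ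
  have h1 : ∀ᵐ y, ∀ q : (Fin n → ℚ) × ℚ, y ∈ Q q → essInf W (volume.restrict (Q q)) ≤ W y := by
    rw [ae_all_iff]
    intro q
    rw [← ae_restrict_iff' (measurableSet_cube _ _)]
    exact ae_essInf_le
  filter_upwards [h1] with y hy r hr
  have hex : ∀ i, ∃ b : ℚ, y i - 2 * r < b ∧ (b : ℝ) < y i - r := fun i =>
    exists_rat_btwn (by linarith)
  choose b hb1 hb2 using hex
  obtain ⟨h, hh1, hh2⟩ := exists_rat_btwn (show 3 * r < 4 * r by linarith)
  have hh0 : (0 : ℝ) < h := by linarith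
  have hsub : Metric.ball y r ⊆ Q (b, h) := by
    intro x hx i
    rw [mem_ball_iff_norm] at hx
    have h2 := abs_le.1 ((abs_coord_sub_le x y i).trans hx.le)
    have := hb1 i
    have := hb2 i
    simp only
    constructor <;> linarith
  have hyQ : y ∈ Q (b, h) := hsub (Metric.mem_ball_self hr)
  calc _ ≤ (volume.withDensity W) (Q (b, h)) := measure_mono hsub
    _ = ∫⁻ x in Q (b, h), W x := withDensity_apply _ (measurableSet_cube _ _)
    _ ≤ K * ENNReal.ofReal h ^ n * essInf W (volume.restrict (Q (b, h))) :=
        hK.lintegral_cube_le _ hh0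
    _ ≤ K * ENNReal.ofReal (4 * r) ^ n * W y := by
        gcongr
        exact hy _ hyQ
    _ = _ := by
        rw [ENNReal.ofReal_mul (by norm_num), mul_pow, ENNReal.ofReal_ofNat]
        ring

lemma IsA1.measure_lt_top {n : ℕ} {W : En n → ℝ≥0∞} {K : ℝ≥0∞} (hK : IsA1 n W K)
    (hKtop : K ≠ ∞) (hW : ∀ x, W x ≠ ∞) {E : Set (En n)} (hE : Bornology.IsBounded E) :
    (volume.withDensity W) E < ∞ := by
  obtain ⟨R, hR0, hR⟩ := hE.subset_ball_lt 0 0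
  have hsub : E ⊆ cube (WithLp.toLp 2 (fun _ => -R)) (2 * R) := by
    intro x hx i
    have h1 := hR hx
    rw [mem_ball_iff_norm] at h1
    have h2 := abs_le.1 ((abs_coord_sub_le x 0 i).trans h1.le)
    simp only [PiLp.zero_apply] at h2 ⊢
    constructor <;> linarith
  refine (measure_mono hsub).trans_lt ?_
  rw [withDensity_apply _ (measurableSet_cube _ _)]
  exact hK.lintegral_cube_lt_top hKtop hW _ (by linarith)

/-- If `μ (B(y, r)) ≤ κ rⁿ` for all `r`, the kernel `|x - y|^{-(n-1)}` lies in weak `L^s (μ)`,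
`s = n / (n - 1)`, with quasinorm at most `κ ^ (1 / s)`. Here this is expressed through integrals over sets
of finite measure, where the constant `n` is `s / (s - 1)`; it follows by splitting the layer cake
integral at height `T = (κ / μ E) ^ (1 / s)`. -/
lemma kernel_bound {n : ℕ} (hn : 2 ≤ n) {s : ℝ} (hs : s = (n : ℝ) / (n - 1))
    (μ : Measure (En n)) {κ : ℝ≥0∞} (hκ : κ ≠ ∞) (y : En n)
    (hball : ∀ r : ℝ, 0 < r → μ (Metric.ball y r) ≤ κ * ENNReal.ofReal r ^ n)
    {E : Set (En n)} (hE : μ E ≠ ∞) :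
    ∫⁻ x in E, ENNReal.ofReal (‖x - y‖ ^ (-((n : ℝ) - 1))) ∂μ ≤
      n * (κ ^ (1 / s) * μ E ^ (1 - 1 / s)) := by
  have hn2 : (2 : ℝ) ≤ n := by exact_mod_cast hn
  have hn1 : (0 : ℝ) < n - 1 := by linarith
  have hs1 : 1 < s := by rw [hs, lt_div_iff₀ hn1]; linarith
  have hs0 : 0 < s := by linarith
  rcases eq_or_ne (μ E) 0 with h0 | h0
  · rw [Measure.restrict_eq_zero.2 h0]
    simp
  have hκ0 : κ ≠ 0 := by
    rintro rfl
    apply h0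
    refine measure_mono_null (subset_univ E) ?_
    rw [← Metric.iUnion_ball_nat_succ y, measure_iUnion_null_iff]
    intro N
    have := hball (N + 1) (by positivity)
    simpa using this
  obtain ⟨k, hk, rfl⟩ : ∃ k : ℝ, 0 < k ∧ κ = ENNReal.ofReal k :=
    ⟨κ.toReal, ENNReal.toReal_pos hκ0 hκ, (ENNReal.ofReal_toReal hκ).symm⟩
  obtain ⟨e, he, hEe⟩ : ∃ e : ℝ, 0 < e ∧ μ E = ENNReal.ofReal e :=
    ⟨(μ E).toReal, ENNReal.toReal_pos h0 hE, (ENNReal.ofReal_toReal hE).symm⟩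
  have hlevel : ∀ t : ℝ, 0 < t →
      μ {x | t < ‖x - y‖ ^ (-((n : ℝ) - 1))} ≤ ENNReal.ofReal (k * t ^ (-s)) := by
    intro t ht
    have hsub : {x | t < ‖x - y‖ ^ (-((n : ℝ) - 1))} ⊆
        Metric.ball y (t ^ (-(1 / ((n : ℝ) - 1)))) := by
      intro x hx
      have hx : t < ‖x - y‖ ^ (-((n : ℝ) - 1)) := hx
      rw [mem_ball_iff_norm]
      have hd : ‖x - y‖ ≠ 0 := by
        intro hd
        rw [hd, Real.zero_rpow (by linarith)] at hx
        linarith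
      have hd : 0 < ‖x - y‖ := lt_of_le_of_ne (norm_nonneg _) hd.symm
      have h1 := Real.rpow_lt_rpow_of_neg ht hx (z := -(1 / ((n : ℝ) - 1)))
        (by have : 0 < 1 / ((n : ℝ) - 1) := by positivity
            linarith)
      rw [← Real.rpow_mul hd.le] at h1
      rwa [show -((n : ℝ) - 1) * -(1 / ((n : ℝ) - 1)) = 1 by field_simp, Real.rpow_one] at h1
    refine (measure_mono hsub).trans ((hball _ (by positivity)).trans (le_of_eq ?_))
    rw [← ENNReal.ofReal_pow (by positivity), ← ENNReal.ofReal_mul hk.le, ← Real.rpow_natCast,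
      ← Real.rpow_mul ht.le, hs]
    congr 3
    field_simp
  set T : ℝ := (k / e) ^ (1 / s) with hT
  have hT0 : 0 < T := by positivity
  have hTs : T ^ s = k / e := by
    rw [hT, ← Real.rpow_mul (by positivity), one_div_mul_cancel hs0.ne', Real.rpow_one]
  have hkT : k * T ^ (-s + 1) = e * T := by
    rw [Real.rpow_add hT0, Real.rpow_neg hT0.le, hTs, Real.rpow_one]
    field_simp
  have heT : e * T = k ^ (1 / s) * e ^ (1 - 1 / s) := by
    rw [hT, Real.div_rpow hk.le he.le, Real.rpow_sub he, Real.rpow_one]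
    ring
  have hn' : (s - 1)⁻¹ = n - 1 := by
    rw [hs]
    field_simp
    ring
  have htail : ∫⁻ t in Ioi T, ENNReal.ofReal (k * t ^ (-s)) = ENNReal.ofReal ((n - 1) * (e * T)) := by
    rw [← ofReal_integral_eq_lintegral_ofReal]
    · rw [integral_const_mul, integral_Ioi_rpow_of_lt (by linarith) hT0]
      congr 1
      have : k * (-T ^ (-s + 1) / (-s + 1)) = (s - 1)⁻¹ * (k * T ^ (-s + 1)) := by
        rw [show -s + 1 = -(s - 1) by ring, neg_div_neg_eq]
        ring
      rw [this, hkT, hn']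
    · exact (integrableOn_Ioi_rpow_of_lt (by linarith) hT0).const_mul k
    · filter_upwards [ae_restrict_mem measurableSet_Ioi] with t ht
      have : 0 < t := hT0.trans ht
      simp only [Pi.zero_apply]
      positivity
  rw [lintegral_eq_lintegral_meas_lt (μ.restrict E)
    (Eventually.of_forall fun x => by simp only [Pi.zero_apply]; positivity)
    (by fun_prop), ← Ioc_union_Ioi_eq_Ioi hT0.le]
  refine (lintegral_union_le _ _ _).trans ?_
  have hA : ∫⁻ t in Ioc 0 T, (μ.restrict E) {x | t < ‖x - y‖ ^ (-((n : ℝ) - 1))} ≤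
      ENNReal.ofReal (e * T) := by
    refine (lintegral_mono (g := fun _ => ENNReal.ofReal e) fun t => ?_).trans ?_
    · simpa [hEe] using measure_mono (μ := μ.restrict E)
        (subset_univ {x | t < ‖x - y‖ ^ (-((n : ℝ) - 1))})
    · rw [setLIntegral_const, Real.volume_Ioc, sub_zero, ENNReal.ofReal_mul he.le]
  have hB : ∫⁻ t in Ioi T, (μ.restrict E) {x | t < ‖x - y‖ ^ (-((n : ℝ) - 1))} ≤
      ENNReal.ofReal ((n - 1) * (e * T)) := by
    rw [← htail]
    refine setLIntegral_mono' measurableSet_Ioi fun t ht => ?_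
    exact (Measure.restrict_apply_le _ _).trans (hlevel t (hT0.trans ht))
  refine (add_le_add hA hB).trans (le_of_eq ?_)
  rw [← ENNReal.ofReal_add (by positivity) (by positivity), hEe,
    ENNReal.ofReal_rpow_of_pos hk, ENNReal.ofReal_rpow_of_pos he,
    ← ENNReal.ofReal_mul (by positivity), ← heT, ← ENNReal.ofReal_natCast,
    ← ENNReal.ofReal_mul (by positivity)]
  congr 1
  ring

/-- Weighted capacitary estimate: a set on which `|g| ≥ 1` has `W`-measure controlled by the
weighted `L¹` norm of `∇g`. -/
lemma level_set_bound {n : ℕ} (hn : 2 ≤ n) {s : ℝ} (hs : s = (n : ℝ) / (n - 1)) {w : En n → ℝ}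
    (hw : AEMeasurable w volume) {K : ℝ≥0∞} (hKtop : K ≠ ∞)
    (hK : IsA1 n (fun x => ENNReal.ofReal (w x) ^ s) K)
    {g : En n → ℝ} (hg : ContDiff ℝ 1 g) (hgc : HasCompactSupport g)
    {E : Set (En n)} (hEm : MeasurableSet E) (hgE : ∀ x ∈ E, 1 ≤ |g x|)
    (hE : (volume.withDensity (fun x => ENNReal.ofReal (w x) ^ s)) E ≠ ∞) :
    (volume : Measure (En n)).toSphere univ *
      (volume.withDensity (fun x => ENNReal.ofReal (w x) ^ s)) E ^ (1 / s) ≤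
      n * 4 ^ (n - 1) * K ^ (1 / s) * ∫⁻ x, ENNReal.ofReal (w x) * ‖fderiv ℝ g x‖ₑ := by
  have hn2 : (2 : ℝ) ≤ n := by exact_mod_cast hn
  have hn1 : (0 : ℝ) < n - 1 := by linarith
  have hs1 : 1 < s := by rw [hs, lt_div_iff₀ hn1]; linarith
  have hs0 : 0 < s := by linarith
  have hs' : 0 < 1 / s := by positivity
  have hs'' : 0 < 1 - 1 / s := by
    rw [sub_pos, div_lt_one hs0]; exact hs1
  set W : En n → ℝ≥0∞ := fun x => ENNReal.ofReal (w x) ^ s with hW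
  set μ := volume.withDensity W with hμ
  set S := (volume : Measure (En n)).toSphere univ with hS
  rcases eq_or_ne (μ E) 0 with h0 | h0
  · rw [h0, ENNReal.zero_rpow_of_pos hs', mul_zero]
    exact zero_le
  have hfc : Continuous (fderiv ℝ g) := hg.continuous_fderiv (by norm_num)
  have hmain : S * μ E ≤ n * 4 ^ (n - 1) * K ^ (1 / s) *
      (∫⁻ x, ENNReal.ofReal (w x) * ‖fderiv ℝ g x‖ₑ) * μ E ^ (1 - 1 / s) := by
    calc S * μ E = ∫⁻ _ in E, S ∂μ := by rw [setLIntegral_const]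
      _ ≤ ∫⁻ x in E, (∫⁻ y, ‖fderiv ℝ g y‖ₑ *
            ENNReal.ofReal (‖x - y‖ ^ (-((n : ℝ) - 1)))) ∂μ := by
          refine setLIntegral_mono' hEm fun x hx => ?_
          refine le_trans ?_ (sphere_mul_enorm_le hn hg hgc x)
          have : (1 : ℝ≥0∞) ≤ ‖g x‖ₑ := by
            rw [← ofReal_norm, Real.norm_eq_abs]
            simpa using ENNReal.ofReal_le_ofReal (hgE x hx)
          calc S = S * 1 := (mul_one _).symm
            _ ≤ _ := by gcongr
      _ = ∫⁻ y, ∫⁻ x in E, ‖fderiv ℝ g y‖ₑ *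
            ENNReal.ofReal (‖x - y‖ ^ (-((n : ℝ) - 1))) ∂μ := by
          refine lintegral_lintegral_swap (Measurable.aemeasurable ?_)
          have h1 : Measurable fun p : En n × En n => ‖fderiv ℝ g p.2‖ₑ :=
            hfc.enorm.measurable.comp measurable_snd
          have h2 : Measurable fun p : En n × En n =>
              ENNReal.ofReal (‖p.1 - p.2‖ ^ (-((n : ℝ) - 1))) := by fun_prop
          exact h1.mul h2
      _ ≤ ∫⁻ y, (n * 4 ^ (n - 1) * K ^ (1 / s) * μ E ^ (1 - 1 / s)) *
            (ENNReal.ofReal (w y) * ‖fderiv ℝ g y‖ₑ) := by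
          refine lintegral_mono_ae ?_
          filter_upwards [hK.ae_ball_le] with y hy
          rw [lintegral_const_mul _ (by fun_prop)]
          have hWy : W y ≠ ∞ := ENNReal.rpow_ne_top_of_nonneg hs0.le ENNReal.ofReal_ne_top
          have h1 := kernel_bound hn hs μ (κ := 4 ^ n * K * W y)
            (ENNReal.mul_ne_top (ENNReal.mul_ne_top (by simp) hKtop) hWy) y hy hE
          have h2 : (4 ^ n * K * W y) ^ (1 / s) =
              4 ^ (n - 1) * K ^ (1 / s) * ENNReal.ofReal (w y) := by
            rw [ENNReal.mul_rpow_of_nonneg _ _ hs'.le, ENNReal.mul_rpow_of_nonneg _ _ hs'.le, hW]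
            simp only
            rw [← ENNReal.rpow_mul, mul_one_div_cancel hs0.ne', ENNReal.rpow_one,
              ← ENNReal.rpow_natCast, ← ENNReal.rpow_mul, ← ENNReal.rpow_natCast,
              Nat.cast_sub (by omega)]
            congr 3
            rw [hs]
            field_simp
            simp
          rw [h2] at h1
          refine (mul_le_mul_right h1 _).trans (le_of_eq (by ring))
      _ = _ := by
          rw [lintegral_const_mul'' (f := fun y => ENNReal.ofReal (w y) * ‖fderiv ℝ g y‖ₑ) _
            (hw.ennreal_ofReal.mul hfc.enorm.measurable.aemeasurable)]
          ring
  have hsplit : μ E = μ E ^ (1 / s) * μ E ^ (1 - 1 / s) := by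
    rw [← ENNReal.rpow_add _ _ h0 hE]
    simp
  have hp0 : μ E ^ (1 - 1 / s) ≠ 0 := by
    simp [ENNReal.rpow_eq_zero_iff, h0, hE]
  have hpt : μ E ^ (1 - 1 / s) ≠ ∞ := ENNReal.rpow_ne_top_of_nonneg hs''.le hE
  refine (ENNReal.mul_le_mul_iff_left hp0 hpt).1 (le_trans (le_of_eq ?_) hmain)
  conv_rhs => rw [hsplit]
  ring

/-! ### Truncation and the weighted Sobolev inequality -/

/-- Smooth truncation of `f` between the heights `l` and `2 * l`, normalised to take the value `1`
where `|f| ≥ 2 * l`. -/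
def trunc {n : ℕ} (f : En n → ℝ) (l : ℝ) (x : En n) : ℝ :=
  Real.smoothTransition ((f x / l) ^ 2 - 1)

lemma deriv_smoothTransition_eq_zero {u : ℝ} (hu : u < 0 ∨ 1 < u) :
    deriv Real.smoothTransition u = 0 := by
  rcases hu with hu | hu
  · have : Real.smoothTransition =ᶠ[nhds u] fun _ => 0 := by
      filter_upwards [gt_mem_nhds hu] with v hv
      exact Real.smoothTransition.zero_of_nonpos (le_of_lt hv)
    rw [this.deriv_eq]; simp
  · have : Real.smoothTransition =ᶠ[nhds u] fun _ => 1 := by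
      filter_upwards [lt_mem_nhds hu] with v hv
      exact Real.smoothTransition.one_of_one_le (le_of_lt hv)
    rw [this.deriv_eq]; simp

lemma trunc_contDiff {n : ℕ} {f : En n → ℝ} (hf : ContDiff ℝ 1 f) (l : ℝ) :
    ContDiff ℝ 1 (trunc f l) := by
  have h1 : ContDiff ℝ 1 Real.smoothTransition :=
    Real.smoothTransition.contDiff (n := 1)
  exact h1.comp (((hf.div_const l).pow 2).sub contDiff_const)

lemma trunc_hasCompactSupport {n : ℕ} {f : En n → ℝ} (hf : HasCompactSupport f) (l : ℝ) :
    HasCompactSupport (trunc f l) := by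
  refine hf.comp_left (g := fun t => Real.smoothTransition ((t / l) ^ 2 - 1)) ?_
  exact Real.smoothTransition.zero_of_nonpos (by simp)

lemma trunc_eq_one {n : ℕ} {f : En n → ℝ} {l : ℝ} (hl : 0 < l) {x : En n}
    (hx : 2 * l ≤ |f x|) : trunc f l x = 1 := by
  refine Real.smoothTransition.one_of_one_le ?_
  have h1 : 2 ≤ |f x / l| := by
    rw [abs_div, abs_of_pos hl, le_div_iff₀ hl]; exact hx
  rw [← sq_abs]
  nlinarith

/-- The gradient of the truncation lives where `l ≤ |f| < 2 * l`, and is there at most `D / l` times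
that of `f`, with `D` absolute. -/
lemma exists_trunc_bound : ∃ D : ℝ, 0 ≤ D ∧ ∀ (n : ℕ) (f : En n → ℝ) (_ : ContDiff ℝ 1 f)
    (l : ℝ) (_ : 0 < l) (x : En n),
    ‖fderiv ℝ (trunc f l) x‖ₑ ≤ ENNReal.ofReal (D / l) *
      {x | l ≤ |f x| ∧ |f x| < 2 * l}.indicator (fun x => ‖fderiv ℝ f x‖ₑ) x := by
  have hη : ContDiff ℝ 1 Real.smoothTransition := Real.smoothTransition.contDiff (n := 1)
  have hηc : Continuous (deriv Real.smoothTransition) := hη.continuous_deriv (by norm_num)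
  obtain ⟨D, hD⟩ := (isCompact_Icc (a := (0 : ℝ)) (b := 3)).exists_bound_of_continuousOn
    hηc.continuousOn
  have hD0 : 0 ≤ D := (norm_nonneg _).trans (hD 0 (by simp))
  refine ⟨4 * D, by positivity, fun n f hf l hl x => ?_⟩
  have hfd := ((hf.differentiable (by norm_num)) x).hasFDerivAt
  have hψ : HasDerivAt (fun t : ℝ => Real.smoothTransition ((t / l) ^ 2 - 1))
      (deriv Real.smoothTransition ((f x / l) ^ 2 - 1) * (2 * (f x / l) * (1 / l))) (f x) := by
    have h1 : HasDerivAt (fun t : ℝ => (t / l) ^ 2 - 1) (2 * (f x / l) * (1 / l)) (f x) := by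
      have := (((hasDerivAt_id (f x)).div_const l).pow 2).sub_const 1
      simpa using this
    exact ((hη.differentiable (by norm_num)) _).hasDerivAt.comp _ h1
  have hcomp := hψ.comp_hasFDerivAt x hfd
  have hder : fderiv ℝ (trunc f l) x =
      (deriv Real.smoothTransition ((f x / l) ^ 2 - 1) * (2 * (f x / l) * (1 / l))) •
        fderiv ℝ f x := hcomp.fderiv
  have hq : |f x / l| = |f x| / l := by rw [abs_div, abs_of_pos hl]
  by_cases hx : l ≤ |f x| ∧ |f x| < 2 * l
  · rw [indicator_of_mem (show x ∈ {x | l ≤ |f x| ∧ |f x| < 2 * l} from hx), hder, enorm_smul]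
    gcongr
    rw [← ofReal_norm]
    refine ENNReal.ofReal_le_ofReal ?_
    have hq1 : 1 ≤ |f x / l| := by rw [hq, le_div_iff₀ hl]; linarith [hx.1]
    have hq2 : |f x / l| ≤ 2 := by rw [hq, div_le_iff₀ hl]; linarith [hx.2]
    have hb := hD ((f x / l) ^ 2 - 1) (by
      rw [← sq_abs]
      constructor <;> nlinarith)
    have hl' : ‖1 / l‖ = 1 / l := by rw [Real.norm_of_nonneg (by positivity)]
    rw [norm_mul, norm_mul, norm_mul, hl', Real.norm_eq_abs (f x / l)]
    calc _ ≤ D * (‖(2 : ℝ)‖ * 2 * (1 / l)) := by gcongr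
      _ = 4 * D / l := by
          norm_num
          ring
  · have : deriv Real.smoothTransition ((f x / l) ^ 2 - 1) = 0 := by
      refine deriv_smoothTransition_eq_zero ?_
      rw [← sq_abs]
      rcases not_and_or.1 hx with h | h
      · left
        have hq1 : |f x / l| < 1 := by rw [hq, div_lt_iff₀ hl]; linarith [not_le.1 h]
        nlinarith [abs_nonneg (f x / l)]
      · right
        have hq1 : 2 ≤ |f x / l| := by rw [hq, le_div_iff₀ hl]; linarith [not_lt.1 h]
        nlinarith
    rw [hder, enorm_smul, this, zero_mul, enorm_zero, zero_mul]
    exact zero_le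

/-- The embedding of `ℓ¹` into `ℓˢ`. -/
lemma tsum_rpow_le_rpow_tsum {ι : Type*} (a : ι → ℝ≥0∞) {s : ℝ} (hs : 1 ≤ s) :
    ∑' i, a i ^ s ≤ (∑' i, a i) ^ s := by
  have hs1 : 0 ≤ s - 1 := by linarith
  have hsplit : ∀ b : ℝ≥0∞, b ^ s = b * b ^ (s - 1) := fun b => by
    conv_lhs => rw [show s = 1 + (s - 1) by ring]
    rw [ENNReal.rpow_add_of_nonneg _ _ zero_le_one hs1, ENNReal.rpow_one]
  calc ∑' i, a i ^ s ≤ ∑' i, a i * (∑' j, a j) ^ (s - 1) := by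
        refine ENNReal.tsum_le_tsum fun i => ?_
        rw [hsplit]
        gcongr
        exact ENNReal.le_tsum i
    _ = _ := by rw [ENNReal.tsum_mul_right, ← hsplit]

/-- Weighted endpoint Sobolev inequality, from the level set bound by Maz'ya's truncation method. -/
lemma sobolev (n : ℕ) (hn : 2 ≤ n) : ∃ C : ℝ≥0∞, C ≠ ∞ ∧ ∀ (s : ℝ) (_ : s = (n : ℝ) / (n - 1))
    (w : En n → ℝ) (_ : AEMeasurable w volume) (K : ℝ≥0∞) (_ : K ≠ ∞)
    (_ : IsA1 n (fun x => ENNReal.ofReal (w x) ^ s) K)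
    (f : En n → ℝ) (_ : ContDiff ℝ 1 f) (_ : HasCompactSupport f),
    ∫⁻ x, ENNReal.ofReal (w x) ^ s * ENNReal.ofReal |f x| ^ s ≤
      C ^ s * K * (∫⁻ x, ENNReal.ofReal (w x) * ‖fderiv ℝ f x‖ₑ) ^ s := by
  obtain ⟨D, hD0, hD⟩ := exists_trunc_bound
  set S := (volume : Measure (En n)).toSphere univ with hS
  have : Nontrivial (En n) := by
    have : Nonempty (Fin n) := ⟨⟨0, by omega⟩⟩
    infer_instance
  have hS0 : S ≠ 0 := by
    rw [hS, ne_eq, Measure.measure_univ_eq_zero]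
    exact Measure.toSphere_ne_zero _
  have hStop : S ≠ ∞ := measure_ne_top _ _
  refine ⟨4 * (S⁻¹ * (n * 4 ^ (n - 1) * ENNReal.ofReal D)), ?_, ?_⟩
  · refine ENNReal.mul_ne_top (by norm_num) (ENNReal.mul_ne_top (ENNReal.inv_ne_top.2 hS0) ?_)
    exact ENNReal.mul_ne_top (ENNReal.mul_ne_top (by simp) (by simp)) ENNReal.ofReal_ne_top
  intro s hs w hw K hKtop hK f hf hfc
  have hn2 : (2 : ℝ) ≤ n := by exact_mod_cast hn
  have hn1 : (0 : ℝ) < n - 1 := by linarith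
  have hs1 : 1 < s := by rw [hs, lt_div_iff₀ hn1]; linarith
  have hs0 : 0 < s := by linarith
  set c1 := S⁻¹ * (n * 4 ^ (n - 1) * ENNReal.ofReal D) with hc1
  set W : En n → ℝ≥0∞ := fun x => ENNReal.ofReal (w x) ^ s with hW
  have hWm : AEMeasurable W volume := hw.ennreal_ofReal.pow_const s
  have hWtop : ∀ x, W x ≠ ∞ := fun x =>
    ENNReal.rpow_ne_top_of_nonneg hs0.le ENNReal.ofReal_ne_top
  set μ := volume.withDensity W with hμ
  have hfcont : Continuous f := hf.continuous
  have hfm : Measurable fun x => |f x| := hfcont.abs.measurable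
  set A : ℤ → Set (En n) := fun k => {x | (2 : ℝ) ^ k ≤ |f x| ∧ |f x| < 2 * (2 : ℝ) ^ k} with hA
  set E : ℤ → Set (En n) := fun k => {x | 2 * (2 : ℝ) ^ k ≤ |f x|} with hE
  have hAm : ∀ k, MeasurableSet (A k) := fun k =>
    (measurableSet_le measurable_const hfm).inter (measurableSet_lt hfm measurable_const)
  have hEm : ∀ k, MeasurableSet (E k) := fun k => measurableSet_le measurable_const hfm
  have hpos : ∀ k : ℤ, (0 : ℝ) < 2 ^ k := fun k => by positivity
  set a : ℤ → ℝ≥0∞ := fun k => ∫⁻ x in A k, ENNReal.ofReal (w x) * ‖fderiv ℝ f x‖ₑ with ha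
  have hEfin : ∀ k, μ (E k) ≠ ∞ := by
    intro k
    refine (hK.measure_lt_top hKtop hWtop ?_).ne
    refine hfc.isCompact.isBounded.subset fun x hx => ?_
    refine subset_tsupport f ?_
    rw [Function.mem_support]
    intro h0
    have hx : 2 * (2 : ℝ) ^ k ≤ |f x| := hx
    rw [h0, abs_zero] at hx
    linarith [hpos k]
  have hAdisj : Pairwise (Function.onFun Disjoint A) := by
    have key : ∀ i j : ℤ, i < j → Disjoint (A i) (A j) := by
      intro i j hij
      rw [Set.disjoint_left]
      intro x hxi hxj
      have h1 : |f x| < 2 * (2 : ℝ) ^ i := hxi.2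
      have h2 : (2 : ℝ) ^ j ≤ |f x| := hxj.1
      have h3 : (2 : ℝ) ^ (i + 1) ≤ 2 ^ j := zpow_le_zpow_right₀ (by norm_num) (by omega)
      rw [zpow_add₀ (by norm_num), zpow_one] at h3
      linarith
    intro i j hij
    rcases lt_or_gt_of_ne hij with h | h
    · exact key i j h
    · exact (key j i h).symm
  -- The factor `2 ^ k` cancels the `1 / 2 ^ k` coming from the gradient of the truncation.
  have hlevel : ∀ k : ℤ, ENNReal.ofReal (2 ^ k) ^ s * μ (E k) ≤ c1 ^ s * K * a k ^ s := by
    intro k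
    have h1 := level_set_bound hn hs hw hKtop hK (trunc_contDiff hf (2 ^ k))
      (trunc_hasCompactSupport hfc (2 ^ k)) (hEm k)
      (fun x hx => by rw [trunc_eq_one (hpos k) hx]; simp) (hEfin k)
    have h2 : ∫⁻ x, ENNReal.ofReal (w x) * ‖fderiv ℝ (trunc f (2 ^ k)) x‖ₑ ≤
        ENNReal.ofReal (D / 2 ^ k) * a k := by
      rw [ha]
      simp only
      rw [← lintegral_indicator (hAm k), ← lintegral_const_mul' _ _ ENNReal.ofReal_ne_top]
      refine lintegral_mono fun x => ?_
      have h3 := hD n f hf (2 ^ k) (hpos k) x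
      refine (mul_le_mul_right h3 _).trans (le_of_eq ?_)
      by_cases hx : x ∈ A k
      · have hx' : x ∈ {x | (2 : ℝ) ^ k ≤ |f x| ∧ |f x| < 2 * (2 : ℝ) ^ k} := hx
        rw [indicator_of_mem hx, indicator_of_mem hx']
        ring
      · have hx' : x ∉ {x | (2 : ℝ) ^ k ≤ |f x| ∧ |f x| < 2 * (2 : ℝ) ^ k} := hx
        rw [indicator_of_notMem hx, indicator_of_notMem hx']
        ring
    have h4 : ENNReal.ofReal (2 ^ k) * μ (E k) ^ (1 / s) ≤ c1 * K ^ (1 / s) * a k := by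
      have h5 : ENNReal.ofReal (2 ^ k) * ENNReal.ofReal (D / 2 ^ k) = ENNReal.ofReal D := by
        rw [← ENNReal.ofReal_mul (hpos k).le, mul_div_cancel₀ _ (hpos k).ne']
      calc ENNReal.ofReal (2 ^ k) * μ (E k) ^ (1 / s)
          = ENNReal.ofReal (2 ^ k) * S⁻¹ * (S * μ (E k) ^ (1 / s)) := by
            rw [mul_assoc, ← mul_assoc S⁻¹, ENNReal.inv_mul_cancel hS0 hStop, one_mul]
        _ ≤ ENNReal.ofReal (2 ^ k) * S⁻¹ * (n * 4 ^ (n - 1) * K ^ (1 / s) *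
            (ENNReal.ofReal (D / 2 ^ k) * a k)) := by
            exact mul_le_mul_right (h1.trans (mul_le_mul_right h2 _)) _
        _ = S⁻¹ * (n * 4 ^ (n - 1) *
            (ENNReal.ofReal (2 ^ k) * ENNReal.ofReal (D / 2 ^ k))) * K ^ (1 / s) * a k := by ring
        _ = _ := by rw [h5]
    have h6 := ENNReal.rpow_le_rpow h4 hs0.le
    rwa [ENNReal.mul_rpow_of_nonneg _ _ hs0.le, ENNReal.mul_rpow_of_nonneg _ _ hs0.le,
      ENNReal.mul_rpow_of_nonneg _ _ hs0.le, ← ENNReal.rpow_mul, ← ENNReal.rpow_mul,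
      one_div_mul_cancel hs0.ne', ENNReal.rpow_one, ENNReal.rpow_one] at h6
  have hpoint : ∀ x, ENNReal.ofReal |f x| ^ s ≤
      ∑' k : ℤ, (E k).indicator (fun _ => (4 * ENNReal.ofReal (2 ^ k)) ^ s) x := by
    intro x
    rcases eq_or_ne (f x) 0 with h0 | h0
    · rw [h0, abs_zero, ENNReal.ofReal_zero, ENNReal.zero_rpow_of_pos hs0]
      exact zero_le
    obtain ⟨k, hk1, hk2⟩ := exists_mem_Ico_zpow (show 0 < |f x| / 2 by positivity)
      (show (1 : ℝ) < 2 by norm_num)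
    rw [zpow_add₀ (by norm_num), zpow_one] at hk2
    refine le_trans ?_ (ENNReal.le_tsum k)
    have hx : x ∈ E k := (show 2 * (2 : ℝ) ^ k ≤ |f x| by linarith)
    rw [indicator_of_mem hx]
    refine ENNReal.rpow_le_rpow ?_ hs0.le
    rw [← ENNReal.ofReal_ofNat 4, ← ENNReal.ofReal_mul (by norm_num)]
    exact ENNReal.ofReal_le_ofReal (by linarith)
  calc ∫⁻ x, W x * ENNReal.ofReal |f x| ^ s = ∫⁻ x, ENNReal.ofReal |f x| ^ s ∂μ := by
        rw [hμ, lintegral_withDensity_eq_lintegral_mul₀ hWm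
          (hfm.ennreal_ofReal.pow_const s).aemeasurable]
        rfl
    _ ≤ ∫⁻ x, ∑' k : ℤ, (E k).indicator (fun _ => (4 * ENNReal.ofReal (2 ^ k)) ^ s) x ∂μ :=
        lintegral_mono hpoint
    _ = ∑' k : ℤ, (4 * ENNReal.ofReal (2 ^ k)) ^ s * μ (E k) := by
        rw [lintegral_tsum fun k => (measurable_const.indicator (hEm k)).aemeasurable]
        refine tsum_congr fun k => ?_
        rw [lintegral_indicator_const (hEm k)]
    _ ≤ ∑' k : ℤ, (4 ^ s * c1 ^ s * K) * a k ^ s := by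
        refine ENNReal.tsum_le_tsum fun k => ?_
        rw [ENNReal.mul_rpow_of_nonneg _ _ hs0.le, mul_assoc]
        refine (mul_le_mul_right (hlevel k) _).trans (le_of_eq (by ring))
    _ = (4 * c1) ^ s * K * ∑' k : ℤ, a k ^ s := by
        rw [ENNReal.tsum_mul_left, ENNReal.mul_rpow_of_nonneg 4 c1 hs0.le]
    _ ≤ (4 * c1) ^ s * K * (∑' k : ℤ, a k) ^ s := by
        gcongr
        exact tsum_rpow_le_rpow_tsum a hs1.le
    _ ≤ _ := by
        gcongr
        rw [ha, ← lintegral_iUnion hAm hAdisj]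
        exact lintegral_mono' Measure.restrict_le_self le_rfl

/-- endpoint `p = 1` Sobolev bound for the iterated maximal operator:
`‖w Mᵐf‖_{L^{n'}} ≤ c [w]_{A_{1,n'}}^{(m+1)/n'} ‖w |∇f|‖_{L^1}`, `n' = n/(n-1)`. -/
theorem statement8 (n m : ℕ) (hn : 2 ≤ n) (hm : 1 ≤ m) :
    ∃ c : ℝ, 0 < c ∧ ∀ w : En n → ℝ, (∀ x, 0 ≤ w x) → LocallyIntegrable w volume →
      A1C n ((n : ℝ) / (n - 1)) w < ∞ →
      ∀ f : En n → ℝ, ContDiff ℝ (⊤ : ℕ∞) f → HasCompactSupport f →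
        lpNorm ((n : ℝ) / (n - 1))
            (fun x => ENNReal.ofReal (w x) *
              (maximal n)^[m] (fun y => ENNReal.ofReal |f y|) x) volume ≤
          ENNReal.ofReal c *
            A1C n ((n : ℝ) / (n - 1)) w ^ (((m : ℝ) + 1) * ((n : ℝ) - 1) / n) *
            ∫⁻ x, ENNReal.ofReal (w x) * ENNReal.ofReal ‖fderiv ℝ f x‖ := by
  obtain ⟨C, hCtop, hC⟩ := sobolev n hn
  set s : ℝ := (n : ℝ) / (n - 1) with hs
  have hn2 : (2 : ℝ) ≤ n := by exact_mod_cast hn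
  have hn1 : (0 : ℝ) < n - 1 := by linarith
  have hs1 : 1 < s := by rw [hs, lt_div_iff₀ hn1]; linarith
  have hs0 : 0 < s := by linarith
  set c0 : ℝ≥0∞ := (ENNReal.ofReal (strongC n s) ^ m) ^ (1 / s) * C with hc0
  have hc0top : c0 ≠ ∞ := by
    refine ENNReal.mul_ne_top (ENNReal.rpow_ne_top_of_nonneg (by positivity) ?_) hCtop
    exact ENNReal.pow_ne_top ENNReal.ofReal_ne_top
  refine ⟨c0.toReal + 1, by positivity, fun w _ hwl hwK f hf hfc => ?_⟩
  set K := A1C n s w with hKdef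
  have hK : IsA1 n (fun x => ENNReal.ofReal (w x) ^ s) K := isA1_A1C hs0.le hwK
  have hwm : AEMeasurable w volume := hwl.aestronglyMeasurable.aemeasurable
  have hf1 : ContDiff ℝ 1 f := hf.of_le (by exact_mod_cast le_top)
  obtain ⟨B, hB⟩ := hfc.exists_bound_of_continuous hf.continuous
  have hgm : Measurable fun y => ENNReal.ofReal |f y| :=
    hf.continuous.abs.measurable.ennreal_ofReal
  have h1 := (strong_type_iterate hK (hwm.ennreal_ofReal.pow_const s) hs1 hgm
    (ENNReal.ofReal_ne_top (r := B)) (fun x => ENNReal.ofReal_le_ofReal (hB x)) m).2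
  have h2 := hC s hs w hwm K hwK.ne hK f hf1 hfc
  set G := ∫⁻ x, ENNReal.ofReal (w x) * ‖fderiv ℝ f x‖ₑ with hG
  have hG' : ∫⁻ x, ENNReal.ofReal (w x) * ENNReal.ofReal ‖fderiv ℝ f x‖ = G := by
    simp only [ofReal_norm, hG]
  have h3 : ∫⁻ x, (ENNReal.ofReal (w x) *
      (maximal n)^[m] (fun y => ENNReal.ofReal |f y|) x) ^ s ≤
      ENNReal.ofReal (strongC n s) ^ m * C ^ s * K ^ (m + 1) * G ^ s := by
    simp only [ENNReal.mul_rpow_of_nonneg _ _ hs0.le]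
    refine h1.trans ((mul_le_mul_right h2 _).trans (le_of_eq ?_))
    rw [mul_pow, pow_succ]
    ring
  have hinv : 0 ≤ 1 / s := by positivity
  have hexp : ((m : ℝ) + 1) * ((n : ℝ) - 1) / n = ((m + 1 : ℕ) : ℝ) * (1 / s) := by
    rw [hs]
    push_cast
    field_simp
  rw [hG', _root_.lpNorm, hexp]
  refine (ENNReal.rpow_le_rpow h3 hinv).trans ?_
  rw [ENNReal.mul_rpow_of_nonneg _ _ hinv, ENNReal.mul_rpow_of_nonneg _ _ hinv,
    ENNReal.mul_rpow_of_nonneg _ _ hinv, ← ENNReal.rpow_mul C, ← ENNReal.rpow_mul G,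
    mul_one_div_cancel hs0.ne', ENNReal.rpow_one, ENNReal.rpow_one, ← ENNReal.rpow_natCast K,
    ← ENNReal.rpow_mul K, ← hc0]
  gcongr
  calc c0 = ENNReal.ofReal c0.toReal := (ENNReal.ofReal_toReal hc0top).symm
    _ ≤ ENNReal.ofReal (c0.toReal + 1) := ENNReal.ofReal_le_ofReal (by linarith)
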